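/- Let L₁, …, Lₙ be pairwise disjoint straight lines in ℝ³ = ℝ² × ℝ, each of which is level, i.e., each Lᵢ is contained in a horizontal plane ℝ² × {tᵢ} for some tᵢ ∈ ℝ (the tᵢ need not be distinct, and lines lying in the same plane are disjoint, hence parallel). Then the fundamental group of the complement ℝ³ ∖ (L₁ ∪ ⋯ ∪ Lₙ) is a free group of rank n. -/

import Mathlib

open Set unitInterval Topology

section VanKampen

variable {X : Type*} [TopologicalSpace X]

/-- Two paths with the same ends inside a simply connected set are homotopic. -/
theorem LevelLines.mk_eq_of_mem {V : Set X} (h : IsSimplyConnected V) {p q : X} (γ γ' : Path p q)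
    (hγ : ∀ t, γ t ∈ V) (hγ' : ∀ t, γ' t ∈ V) :
    Path.Homotopic.Quotient.mk γ = Path.Homotopic.Quotient.mk γ' := by
  have := h.simplyConnectedSpace
  have hp : p ∈ V := by simpa using hγ 0
  have hq : q ∈ V := by simpa using hγ 1
  let δ : Path (⟨p, hp⟩ : V) ⟨q, hq⟩ :=
    { toFun := fun t => ⟨γ t, hγ t⟩, source' := by simp, target' := by simp }
  let δ' : Path (⟨p, hp⟩ : V) ⟨q, hq⟩ :=
    { toFun := fun t => ⟨γ' t, hγ' t⟩, source' := by simp, target' := by simp }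
  have H := SimplyConnectedSpace.paths_homotopic δ δ'
  exact Path.Homotopic.Quotient.eq.2 (H.map ⟨Subtype.val, continuous_subtype_val⟩)

theorem LevelLines.exists_path {V : Set X} (h : IsPathConnected V) {p q : X} (hp : p ∈ V)
    (hq : q ∈ V) : ∃ γ : Path p q, ∀ t, γ t ∈ V :=
  ⟨(h.joinedIn p hp q hq).somePath, (h.joinedIn p hp q hq).somePath_mem⟩

theorem LevelLines.trans_mem {V : Set X} {p q r : X} {γ : Path p q} {γ' : Path q r}
    (hγ : ∀ t, γ t ∈ V) (hγ' : ∀ t, γ' t ∈ V) : ∀ t, γ.trans γ' t ∈ V := by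
  intro t
  rw [Path.trans_apply]
  split_ifs
  · exact hγ _
  · exact hγ' _

theorem LevelLines.symm_mem {V : Set X} {p q : X} {γ : Path p q}
    (hγ : ∀ t, γ t ∈ V) : ∀ t, γ.symm t ∈ V := fun _ => hγ _

/-- Induction along a path: a property of classes of paths starting at `x` that is stable
under composition with small paths holds for all paths. -/
theorem LevelLines.path_induction {ι : Type*} (V : ι → Set X) (hV : ∀ i, IsOpen (V i))
    (hcov : ∀ q, ∃ i, q ∈ V i) {x : X}
    (T : ∀ q, Path.Homotopic.Quotient x q → Prop) (h0 : T x (.refl x))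
    (hstep : ∀ i p q (k : Path.Homotopic.Quotient x p) (γ : Path p q), (∀ t, γ t ∈ V i) →
      T p k → T q (k.trans (.mk γ))) {y : X} (k : Path.Homotopic.Quotient x y) : T y k := by
  induction k using Path.Homotopic.Quotient.ind with | mk γ =>
  have hT : ∀ p q (e : p = q) (k : Path.Homotopic.Quotient x p), T p k →
      T q (k.cast rfl e.symm) := by
    rintro p q rfl k hk; simpa using hk
  let P : I → Prop := fun s => T (γ s) ((Path.Homotopic.Quotient.mk (γ.subpath 0 s)).cast
    γ.source.symm rfl)
  have hcomp : ∀ s s' i, (∀ r ∈ uIcc s s', γ r ∈ V i) → P s → P s' := by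
    intro s s' i hi hs
    have := hstep i _ _ _ (γ.subpath s s') (by
      intro r
      have : γ.subpath s s' r ∈ range (γ.subpath s s') := ⟨r, rfl⟩
      rw [Path.range_subpath] at this
      obtain ⟨u, hu, hu'⟩ := this
      rw [← hu']; exact hi u hu) hs
    have e : ((Path.Homotopic.Quotient.mk (γ.subpath 0 s)).cast γ.source.symm rfl).trans
        (Path.Homotopic.Quotient.mk (γ.subpath s s')) =
        (Path.Homotopic.Quotient.mk (γ.subpath 0 s')).cast γ.source.symm rfl := by
      have h1 : Path.Homotopic.Quotient.mk (γ.subpath 0 s') =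
        (Path.Homotopic.Quotient.mk (γ.subpath 0 s)).trans
          (Path.Homotopic.Quotient.mk (γ.subpath s s')) := by
        rw [← Path.Homotopic.Quotient.mk_trans]
        exact (Path.Homotopic.Quotient.eq.2 ⟨Path.Homotopy.subpathTransSubpath γ 0 s s'⟩).symm
      rw [h1, ← Path.Homotopic.Quotient.mk_trans, ← Path.Homotopic.Quotient.mk_cast,
        ← Path.Homotopic.Quotient.mk_cast, ← Path.Homotopic.Quotient.mk_trans]
      rfl
    show T _ _
    rw [← e]; exact this
  have hloc : ∀ s, ∀ᶠ s' in 𝓝 s, (P s' ↔ P s) := by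
    intro s
    obtain ⟨i, hi⟩ := hcov (γ s)
    have hn : γ ⁻¹' V i ∈ 𝓝 s := ((hV i).preimage γ.continuous).mem_nhds hi
    obtain ⟨W, hW, hWc, hWs⟩ : ∃ W ∈ 𝓝 s, W.OrdConnected ∧ W ⊆ γ ⁻¹' V i := by
      obtain ⟨ε, hε, hb⟩ := Metric.mem_nhds_iff.1 hn
      refine ⟨Metric.ball s ε, Metric.ball_mem_nhds _ hε, ?_, hb⟩
      constructor
      intro a ha b hb c hc
      rw [Metric.mem_ball, Subtype.dist_eq, Real.dist_eq, abs_lt] at *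
      have h1 : (a : ℝ) ≤ c := hc.1
      have h2 : (c : ℝ) ≤ b := hc.2
      constructor <;> linarith [ha.1, ha.2, hb.1, hb.2]
    filter_upwards [hW] with s' hs'
    have hs := mem_of_mem_nhds hW
    exact ⟨hcomp s' s i fun r hr => hWs (hWc.uIcc_subset hs' hs hr),
      hcomp s s' i fun r hr => hWs (hWc.uIcc_subset hs hs' hr)⟩
  have hclopen : IsClopen {s | P s} := by
    constructor
    · rw [← isOpen_compl_iff, isOpen_iff_mem_nhds]
      intro s hs
      filter_upwards [hloc s] with s' hs' using fun h => hs (hs'.1 h)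
    · rw [isOpen_iff_mem_nhds]
      intro s hs
      filter_upwards [hloc s] with s' hs' using hs'.2 hs
  have hP0 : P 0 := by
    have := hT x (γ 0) γ.source.symm _ h0
    show T _ _
    convert this using 1
    rw [Path.subpath_self]
    rw [← Path.Homotopic.Quotient.mk_cast, ← Path.Homotopic.Quotient.mk_refl,
      ← Path.Homotopic.Quotient.mk_cast]
    congr 1
    ext; simp
  have hP1 : P 1 := by
    have : {s | P s} = univ := hclopen.eq_univ ⟨0, hP0⟩
    have h : (1 : I) ∈ {s | P s} := by rw [this]; trivial
    exact h
  have := hT _ _ γ.target _ hP1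
  convert this using 1
  rw [Path.subpath_zero_one]
  simp only [← Path.Homotopic.Quotient.mk_cast]
  rfl

end VanKampen

section Free

variable {X : Type*} [TopologicalSpace X] {ι : Type*}

/-- A space glued from a simply connected open `U₀` and simply connected open `U i`, where
`U₀ ∩ U i` has exactly two path components `A i` and `B i`. -/
structure LevelLines.Cover (U₀ : Set X) (U A B : ι → Set X) : Prop where
  open₀ : IsOpen U₀
  openU : ∀ i, IsOpen (U i)
  openA : ∀ i, IsOpen (A i)
  openB : ∀ i, IsOpen (B i)
  sc₀ : IsSimplyConnected U₀
  scU : ∀ i, IsSimplyConnected (U i)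
  pcA : ∀ i, IsPathConnected (A i)
  pcB : ∀ i, IsPathConnected (B i)
  inter : ∀ i, U₀ ∩ U i = A i ∪ B i
  disj : ∀ i, Disjoint (A i) (B i)
  interU : ∀ i j, i ≠ j → U i ∩ U j ⊆ U₀
  cover : ∀ q, q ∈ U₀ ∨ ∃ i, q ∈ U i

namespace LevelLines.Cover

variable {U₀ : Set X} {U A B : ι → Set X}

theorem A_sub₀ (C : LevelLines.Cover U₀ U A B) (i : ι) : A i ⊆ U₀ := fun q hq =>
  ((C.inter i).symm ▸ (Or.inl hq : q ∈ A i ∪ B i) : q ∈ U₀ ∩ U i).1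
theorem A_subU (C : LevelLines.Cover U₀ U A B) (i : ι) : A i ⊆ U i := fun q hq =>
  ((C.inter i).symm ▸ (Or.inl hq : q ∈ A i ∪ B i) : q ∈ U₀ ∩ U i).2
theorem B_sub₀ (C : LevelLines.Cover U₀ U A B) (i : ι) : B i ⊆ U₀ := fun q hq =>
  ((C.inter i).symm ▸ (Or.inr hq : q ∈ A i ∪ B i) : q ∈ U₀ ∩ U i).1
theorem B_subU (C : LevelLines.Cover U₀ U A B) (i : ι) : B i ⊆ U i := fun q hq =>
  ((C.inter i).symm ▸ (Or.inr hq : q ∈ A i ∪ B i) : q ∈ U₀ ∩ U i).2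


theorem surj (C : LevelLines.Cover U₀ U A B) {x : X} (a b : ι → X) (ha : ∀ i, a i ∈ A i) (hb : ∀ i, b i ∈ B i)
    (α : ∀ i, Path x (a i)) (β : ∀ i, Path (a i) (b i)) (γ : ∀ i, Path (b i) x)
    (hα : ∀ i t, α i t ∈ U₀) (hβ : ∀ i t, β i t ∈ U i) (hγ : ∀ i t, γ i t ∈ U₀)
    (hx : x ∈ U₀) (R : Subgroup (FundamentalGroup X x))
    (hR : ∀ i, FundamentalGroup.fromPath
      (((Path.Homotopic.Quotient.mk (α i)).trans (.mk (β i))).trans (.mk (γ i))) ∈ R) : R = ⊤ := by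
  let V : Option ι → Set X := fun c => c.elim U₀ U
  let K : ∀ (_ : Option ι) (q : X), Path.Homotopic.Quotient x q → Prop := fun c q k =>
    match c with
    | none => ∃ δ : Path x q, (∀ t, δ t ∈ U₀) ∧ k = .mk δ
    | some i => ∃ (δ : Path x (a i)) (ε : Path (a i) q), (∀ t, δ t ∈ U₀) ∧ (∀ t, ε t ∈ U i) ∧
        k = (Path.Homotopic.Quotient.mk δ).trans (.mk ε)
  have Kuniq : ∀ c q k k', K c q k → K c q k' → k = k' := by
    rintro (_ | i) q k k'
    · rintro ⟨δ, h, rfl⟩ ⟨δ', h', rfl⟩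
      exact mk_eq_of_mem C.sc₀ _ _ h h'
    · rintro ⟨δ, ε, h, h2, rfl⟩ ⟨δ', ε', h', h2', rfl⟩
      rw [mk_eq_of_mem C.sc₀ _ _ h h', mk_eq_of_mem (C.scU i) _ _ h2 h2']
  have Kex : ∀ c q, q ∈ V c → ∃ k, K c q k := by
    rintro (_ | i) q hq
    · obtain ⟨δ, hδ⟩ := exists_path C.sc₀.isPathConnected hx hq
      exact ⟨_, δ, hδ, rfl⟩
    · obtain ⟨δ, hδ⟩ := exists_path C.sc₀.isPathConnected hx (C.A_sub₀ i (ha i))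
      obtain ⟨ε, hε⟩ := exists_path (C.scU i).isPathConnected (C.A_subU i (ha i)) hq
      exact ⟨_, δ, ε, hδ, hε, rfl⟩
  have Kmem : ∀ c q k, K c q k → q ∈ V c := by
    rintro (_ | i) q k
    · rintro ⟨δ, h, rfl⟩
      show q ∈ _
      have := h 1
      rw [Path.target] at this
      exact this
    · rintro ⟨δ, ε, h, h2, rfl⟩
      show q ∈ _
      have := h2 1
      rw [Path.target] at this
      exact this
  have Kstep : ∀ c p q k (η : Path p q), (∀ t, η t ∈ V c) → K c p k → K c q (k.trans (.mk η)) := by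
    rintro (_ | i) p q k η hη
    · rintro ⟨δ, h, rfl⟩
      exact ⟨δ.trans η, trans_mem h hη, by rw [Path.Homotopic.Quotient.mk_trans]⟩
    · rintro ⟨δ, ε, h, h2, rfl⟩
      exact ⟨δ, ε.trans η, h, trans_mem h2 hη, by
        rw [Path.Homotopic.Quotient.mk_trans, Path.Homotopic.Quotient.trans_assoc]⟩
  have key : ∀ i q k k', K none q k → K (some i) q k' → ∃ g ∈ R, k' = Path.Homotopic.Quotient.trans g k := by
    rintro i q k k' hk hk'
    have hq₀ : q ∈ U₀ := Kmem none _ _ hk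
    have hqU : q ∈ U i := Kmem (some i) _ _ hk'
    have hq : q ∈ A i ∪ B i := by rw [← C.inter i]; exact ⟨hq₀, hqU⟩
    rcases hq with hq | hq
    · refine ⟨1, R.one_mem, ?_⟩
      obtain ⟨η, hη⟩ := exists_path (C.pcA i) (ha i) hq
      have e1 := Kuniq (some i) q k' _ hk' ⟨α i, η, hα i, fun t => C.A_subU i (hη t), rfl⟩
      have e2 := Kuniq none q k _ hk ⟨(α i).trans η,
        trans_mem (hα i) fun t => C.A_sub₀ i (hη t), rfl⟩
      rw [e1, e2, Path.Homotopic.Quotient.mk_trans]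
      exact (Path.Homotopic.Quotient.refl_trans _).symm
    · refine ⟨_, hR i, ?_⟩
      obtain ⟨η, hη⟩ := exists_path (C.pcB i) (hb i) hq
      have e1 := Kuniq (some i) q k' _ hk' ⟨α i, (β i).trans η, hα i,
        trans_mem (hβ i) fun t => C.B_subU i (hη t), rfl⟩
      have e2 := Kuniq none q k _ hk ⟨(γ i).symm.trans η,
        trans_mem (symm_mem (hγ i)) fun t => C.B_sub₀ i (hη t), rfl⟩
      rw [e1, e2, Path.Homotopic.Quotient.mk_trans, Path.Homotopic.Quotient.mk_trans, Path.Homotopic.Quotient.mk_symm]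
      simp only [FundamentalGroup.fromPath, FundamentalGroup.fromArrow, Path.Homotopic.Quotient.trans_assoc]
      rw [← Path.Homotopic.Quotient.trans_assoc (Path.Homotopic.Quotient.mk (γ i)), Path.Homotopic.Quotient.trans_symm, Path.Homotopic.Quotient.refl_trans]
  have gtrans : ∀ g ∈ R, ∀ h ∈ R, ∃ f ∈ R, ∀ q (k : Path.Homotopic.Quotient x q),
      Path.Homotopic.Quotient.trans g (Path.Homotopic.Quotient.trans h k) = Path.Homotopic.Quotient.trans f k := by
    intro g hg h hh
    refine ⟨h * g, R.mul_mem hh hg, fun q k => ?_⟩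
    rw [FundamentalGroup.mul_def, Path.Homotopic.Quotient.trans_assoc]
  have key0 : ∀ c q k k', K none q k → K c q k' → ∃ g ∈ R, k' = Path.Homotopic.Quotient.trans g k := by
    rintro (_ | i) q k k' hk hk'
    · exact ⟨1, R.one_mem, by rw [Kuniq none q k k' hk hk']; exact (Path.Homotopic.Quotient.refl_trans _).symm⟩
    · exact key i q k k' hk hk'
  have key0' : ∀ c q k k', K none q k → K c q k' → ∃ g ∈ R, k = Path.Homotopic.Quotient.trans g k' := by
    rintro c q k k' hk hk'
    obtain ⟨g, hg, rfl⟩ := key0 c q k k' hk hk'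
    refine ⟨g⁻¹, R.inv_mem hg, ?_⟩
    rw [← Path.Homotopic.Quotient.trans_assoc, FundamentalGroup.inv_def, Path.Homotopic.Quotient.symm_trans,
      Path.Homotopic.Quotient.refl_trans]
  have key2 : ∀ c d q k k', K c q k → K d q k' → ∃ g ∈ R, k = Path.Homotopic.Quotient.trans g k' := by
    rintro c d q k k' hk hk'
    by_cases hcd : c = d
    · subst hcd
      exact ⟨1, R.one_mem, by rw [Kuniq _ _ k k' hk hk']; exact (Path.Homotopic.Quotient.refl_trans _).symm⟩
    have hq : q ∈ U₀ := by
      have h1 := Kmem _ _ _ hk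
      have h2 := Kmem _ _ _ hk'
      rcases c with _ | i
      · exact h1
      rcases d with _ | j
      · exact h2
      exact C.interU i j (fun h => hcd (by rw [h])) ⟨h1, h2⟩
    obtain ⟨k₀, hk₀⟩ := Kex none q hq
    obtain ⟨g, hg, e⟩ := key0 c q k₀ k hk₀ hk
    obtain ⟨g', hg', e'⟩ := key0' d q k₀ k' hk₀ hk'
    obtain ⟨f, hf, e''⟩ := gtrans g hg g' hg'
    exact ⟨f, hf, by rw [e, e', e'']⟩
  have hall : ∀ q (k : Path.Homotopic.Quotient x q),
      ∃ c, ∃ g ∈ R, ∃ k', K c q k' ∧ k = Path.Homotopic.Quotient.trans g k' := by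
    intro q k
    refine path_induction V ?_ ?_ (fun q k => ∃ c, ∃ g ∈ R, ∃ k', K c q k' ∧
      k = Path.Homotopic.Quotient.trans g k') ?_ ?_ k
    · rintro (_ | i)
      · exact C.open₀
      · exact C.openU i
    · intro q
      rcases C.cover q with h | ⟨i, h⟩
      · exact ⟨none, h⟩
      · exact ⟨some i, h⟩
    · exact ⟨none, 1, R.one_mem, .refl x, ⟨Path.refl x, fun _ => hx, rfl⟩,
        (Path.Homotopic.Quotient.refl_trans _).symm⟩
    · rintro d p q k η hη ⟨c, g, hg, k', hk', rfl⟩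
      obtain ⟨k'', hk''⟩ := Kex d p (by simpa using hη 0)
      obtain ⟨g', hg', rfl⟩ := key2 c d p k' k'' hk' hk''
      obtain ⟨f, hf, e⟩ := gtrans g hg g' hg'
      refine ⟨d, f, hf, _, Kstep d p q k'' η hη hk'', ?_⟩
      rw [e, Path.Homotopic.Quotient.trans_assoc]
  rw [eq_top_iff]
  rintro k -
  obtain ⟨c, g, hg, k', hk', e⟩ := hall x k
  obtain ⟨g', hg', e'⟩ := key0 c x (.refl x) k' ⟨Path.refl x, fun _ => hx, rfl⟩ hk'
  have : k = g' * g := by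
    rw [e, e', Path.Homotopic.Quotient.trans_refl]; rfl
  rw [this]
  exact R.mul_mem hg' hg


open Classical in
/-- The locally constant potential defining the covering with fiber the free group. -/
noncomputable def _root_.LevelLines.pot (B : ι → Set X) (c : Option ι) (q : X) : FreeGroup ι :=
  match c with
  | none => 1
  | some i => if q ∈ B i then FreeGroup.of i else 1

theorem pot_locallyConst (C : LevelLines.Cover U₀ U A B) (c d : Option ι) (hcd : c ≠ d) (q : X)
    (hc : q ∈ c.elim U₀ U) (hd : q ∈ d.elim U₀ U) :
    ∀ᶠ q' in 𝓝 q, LevelLines.pot B c q' = LevelLines.pot B c q := by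
  rcases c with _ | i
  · exact Filter.Eventually.of_forall fun _ => rfl
  have hq₀ : q ∈ U₀ := by
    rcases d with _ | j
    · exact hd
    · exact C.interU i j (fun h => hcd (by rw [h])) ⟨hc, hd⟩
  have hq : q ∈ A i ∪ B i := by rw [← C.inter i]; exact ⟨hq₀, hc⟩
  rcases hq with hq | hq
  · filter_upwards [(C.openA i).mem_nhds hq] with q' hq'
    have h1 : q ∉ B i := disjoint_left.1 (C.disj i) hq
    have h2 : q' ∉ B i := disjoint_left.1 (C.disj i) hq'
    simp [LevelLines.pot, h1, h2]
  · filter_upwards [(C.openB i).mem_nhds hq] with q' hq'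
    simp [LevelLines.pot, hq, hq']

open Classical in
/-- The fiber bundle core of the covering. -/
noncomputable def core (C : LevelLines.Cover U₀ U A B) [TopologicalSpace (FreeGroup ι)] [DiscreteTopology (FreeGroup ι)] :
    FiberBundleCore (Option ι) X (FreeGroup ι) where
  baseSet c := c.elim U₀ U
  isOpen_baseSet c := by
    rcases c with _ | i
    · exact C.open₀
    · exact C.openU i
  indexAt q := if h : q ∈ U₀ then none else some ((C.cover q).resolve_left h).choose
  mem_baseSet_at q := by
    split_ifs with h
    · exact h
    · exact ((C.cover q).resolve_left h).choose_spec
  coordChange c d q v := (LevelLines.pot B d q)⁻¹ * LevelLines.pot B c q * v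
  coordChange_self c q _ v := by simp
  continuousOn_coordChange c d := by
    by_cases hcd : c = d
    · subst hcd
      simpa using continuous_snd.continuousOn
    rintro ⟨q, v⟩ ⟨⟨hc, hd⟩, -⟩
    apply ContinuousAt.continuousWithinAt
    have h1 := C.pot_locallyConst c d hcd q hc hd
    have h2 := C.pot_locallyConst d c (Ne.symm hcd) q hd hc
    have : (fun p : X × FreeGroup ι => (LevelLines.pot B d p.1)⁻¹ * LevelLines.pot B c p.1 * p.2)
        =ᶠ[𝓝 (q, v)] fun p => (LevelLines.pot B d q)⁻¹ * LevelLines.pot B c q * p.2 := by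
      filter_upwards [continuous_fst.continuousAt.eventually h1,
        continuous_fst.continuousAt.eventually h2] with p hp1 hp2
      rw [hp1, hp2]
    refine ContinuousAt.congr ?_ this.symm
    exact (continuous_of_discreteTopology (f := fun w : FreeGroup ι =>
      (LevelLines.pot B d q)⁻¹ * LevelLines.pot B c q * w)).continuousAt.comp
      continuous_snd.continuousAt
  coordChange_comp c d e q _ v := by group

section
variable [TopologicalSpace (FreeGroup ι)] [DiscreteTopology (FreeGroup ι)]

theorem isCov (C : LevelLines.Cover U₀ U A B) : IsCoveringMap C.core.proj :=
  FiberBundle.isCoveringMap (F := FreeGroup ι) (E := C.core.Fiber)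

/-- The point of the covering over `q` with absolute coordinate `u`. -/
noncomputable def pt (C : LevelLines.Cover U₀ U A B) (q : X) (u : FreeGroup ι) : C.core.proj ⁻¹' {q} :=
  ⟨⟨q, (LevelLines.pot B (C.core.indexAt q) q)⁻¹ * u⟩, rfl⟩

theorem pt_inj (C : LevelLines.Cover U₀ U A B) (q : X) (u u' : FreeGroup ι) (h : C.pt q u = C.pt q u') : u = u' := by
  have h1 := congrArg Subtype.val h
  simp only [pt] at h1
  have h2 := (Bundle.TotalSpace.mk.inj h1).2
  exact mul_left_cancel (eq_of_heq h2)

theorem monodromy_pt (C : LevelLines.Cover U₀ U A B) (c : Option ι) {p q : X} (γ : Path p q) (hγ : ∀ t, γ t ∈ c.elim U₀ U)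
    (u : FreeGroup ι) : C.isCov.monodromy (.mk γ) (C.pt p u) =
      C.pt q (LevelLines.pot B c q * (LevelLines.pot B c p)⁻¹ * u) := by
  let v := (LevelLines.pot B c p)⁻¹ * u
  let Γ : I → C.core.TotalSpace := fun t =>
    (C.core.localTriv c).toOpenPartialHomeomorph.symm (γ t, v)
  have hΓ : Continuous Γ := by
    rw [← continuousOn_univ]
    refine (C.core.localTriv c).toOpenPartialHomeomorph.symm.continuousOn.comp
      (by fun_prop) ?_
    intro t _
    exact (FiberBundleCore.mem_localTriv_target _ _ _).2 (hγ t)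
  apply Subtype.ext
  have h := (C.isCov.eq_liftPath_iff (γ := (γ : C(I, X))) (e := (C.pt p u).1) (Γ := Γ)
    (by simp [pt])).2 ⟨hΓ, rfl, by
      simp only [Γ, FiberBundleCore.localTriv_symm_apply, pt, v]
      rw [γ.source]
      simp [core]⟩
  have h1 := congrFun h 1
  refine Eq.trans h1.symm ?_
  simp only [Γ, FiberBundleCore.localTriv_symm_apply, pt, v]
  rw [γ.target]
  simp [core, mul_assoc]

theorem monodromy_loop (C : LevelLines.Cover U₀ U A B) {x : X} {a b : X} {i : ι} (ha : a ∈ A i) (hb : b ∈ B i)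
    (α : Path x a) (β : Path a b) (γ : Path b x)
    (hα : ∀ t, α t ∈ U₀) (hβ : ∀ t, β t ∈ U i) (hγ : ∀ t, γ t ∈ U₀) (u : FreeGroup ι) :
    C.isCov.monodromy (((Path.Homotopic.Quotient.mk α).trans (.mk β)).trans (.mk γ)) (C.pt x u) =
      C.pt x (FreeGroup.of i * u) := by
  rw [C.isCov.monodromy_trans_apply, C.isCov.monodromy_trans_apply, C.monodromy_pt none α hα,
    C.monodromy_pt (some i) β hβ, C.monodromy_pt none γ hγ]
  have : a ∉ B i := disjoint_left.1 (C.disj i) ha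
  simp [LevelLines.pot, hb, this]

end

theorem free₀ (C : LevelLines.Cover U₀ U A B) {x : X} (hx : x ∈ U₀) : Nonempty (FundamentalGroup X x ≃* FreeGroup ι) := by
  let _ : TopologicalSpace (FreeGroup ι) := ⊥
  have : DiscreteTopology (FreeGroup ι) := ⟨rfl⟩
  choose a ha using fun i => (C.pcA i).nonempty
  choose b hb using fun i => (C.pcB i).nonempty
  choose α hα using fun i => exists_path C.sc₀.isPathConnected hx (C.A_sub₀ i (ha i))
  choose β hβ using fun i =>
    exists_path (C.scU i).isPathConnected (C.A_subU i (ha i)) (C.B_subU i (hb i))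
  choose γ hγ using fun i => exists_path C.sc₀.isPathConnected (C.B_sub₀ i (hb i)) hx
  let loop : ι → FundamentalGroup X x := fun i => FundamentalGroup.fromPath
      (((Path.Homotopic.Quotient.mk (α i)).trans (.mk (β i))).trans (.mk (γ i)))
  let φ : FreeGroup ι →* FundamentalGroup X x := FreeGroup.lift loop
  have hloop : ∀ i, φ (FreeGroup.of i) = loop i := fun i => FreeGroup.lift_apply_of
  have hsurj : Function.Surjective φ := by
    rw [← MonoidHom.range_eq_top]
    exact C.surj a b ha hb α β γ hα hβ hγ hx φ.range fun i => ⟨FreeGroup.of i, hloop i⟩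
  have hact1 : ∀ i u, C.isCov.monodromyPerm x (loop i) (C.pt x u) =
      C.pt x (FreeGroup.of i * u) := fun i u =>
    C.monodromy_loop (ha i) (hb i) (α i) (β i) (γ i) (hα i) (hβ i) (hγ i) u
  have hact : ∀ w u, C.isCov.monodromyPerm x (φ w) (C.pt x u) = C.pt x (w * u) := by
    intro w
    induction w using FreeGroup.induction_on with
    | C1 => intro u; rw [map_one, map_one, Equiv.Perm.one_apply, one_mul]
    | of i => intro u; rw [hloop, hact1]
    | inv_of i ih =>
      intro u
      rw [map_inv, map_inv, Equiv.Perm.inv_eq_iff_eq, ih]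
      simp
    | mul w w' ih ih' =>
      intro u
      rw [map_mul, map_mul, Equiv.Perm.mul_apply, ih', ih, mul_assoc]
  have hinj : Function.Injective φ := by
    rw [injective_iff_map_eq_one]
    intro w hw
    have := hact w 1
    rw [hw, map_one, Equiv.Perm.one_apply, mul_one] at this
    exact (C.pt_inj x _ _ this).symm
  exact ⟨(MulEquiv.ofBijective φ ⟨hinj, hsurj⟩).symm⟩

theorem free (C : LevelLines.Cover U₀ U A B) (hne : U₀.Nonempty) (x : X) : Nonempty (FundamentalGroup X x ≃* FreeGroup ι) := by
  obtain ⟨x₀, hx₀⟩ := hne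
  have hj : Nonempty (Path x x₀) := by
    rcases C.cover x with h | ⟨i, h⟩
    · exact ⟨(exists_path C.sc₀.isPathConnected h hx₀).choose⟩
    · obtain ⟨a, ha⟩ := (C.pcA i).nonempty
      exact ⟨(exists_path (C.scU i).isPathConnected h (C.A_subU i ha)).choose.trans
        (exists_path C.sc₀.isPathConnected (C.A_sub₀ i ha) hx₀).choose⟩
  obtain ⟨p⟩ := hj
  obtain ⟨e⟩ := C.free₀ hx₀
  exact ⟨(FundamentalGroup.fundamentalGroupMulEquivOfPath p).trans e⟩

end LevelLines.Cover

end Free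

section Geometry

/-- The geometric setting: level lines `{(y, z) | z = t i, f i y = a i}`, with `X` the
complement. -/
theorem LevelLines.geometry {n : ℕ} (t a : Fin n → ℝ) (f : Fin n → (ℝ × ℝ →L[ℝ] ℝ)) (e : ℝ × ℝ)
    (hfe : ∀ i, f i e = 1) (hpar : ∀ i j, t i = t j → f i = f j)
    (hinj : ∀ i j, i ≠ j → t i = t j → a i ≠ a j)
    (P : (ℝ × ℝ) × ℝ → Prop) (hP : ∀ q, P q ↔ ∀ i, q.2 = t i → f i q.1 ≠ a i)
    (x : {q // P q}) : Nonempty (FundamentalGroup {q // P q} x ≃* FreeGroup (Fin n)) := by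
  obtain ⟨δ, hδ, hδ0⟩ : ∃ δ : ℝ, (∀ i j, t i ≠ t j → δ < |t i - t j|) ∧ 0 < δ := by
    have h : ∀ᶠ δ in 𝓝[>] (0 : ℝ), (∀ i j, t i ≠ t j → δ < |t i - t j|) := by
      refine Filter.eventually_all.2 fun i => Filter.eventually_all.2 fun j => ?_
      by_cases hij : t i = t j
      · simp [hij]
      · have : (0 : ℝ) < |t i - t j| := abs_pos.2 (sub_ne_zero.2 hij)
        filter_upwards [nhdsWithin_le_nhds (Iio_mem_nhds this)] with δ h _ using h
    exact (h.and self_mem_nhdsWithin).exists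
  have hc : ∀ i, ∃ c : ℝ, (∀ j, a i < a j → c < a j) ∧ a i < c := by
    intro i
    have h : ∀ᶠ c in 𝓝[>] (a i), ∀ j, a i < a j → c < a j := by
      refine Filter.eventually_all.2 fun j => ?_
      by_cases hij : a i < a j
      · filter_upwards [nhdsWithin_le_nhds (Iio_mem_nhds hij)] with δ h _ using h
      · simp [hij]
    exact (h.and self_mem_nhdsWithin).exists
  choose c hc1 hc2 using hc
  obtain ⟨R, hR⟩ : ∃ R : ℝ, ∀ i, R < a i := by
    have h : ∀ᶠ R in Filter.atBot, ∀ i, R < a i :=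
      Filter.eventually_all.2 fun i => Filter.eventually_lt_atBot _
    exact h.exists
  have hnear : ∀ i k (z : ℝ), |z - t i| < δ → z = t k → t k = t i := by
    intro i k z hz hk
    by_contra hne
    have := hδ k i hne
    rw [hk] at hz
    linarith
  let U₀ : Set ((ℝ × ℝ) × ℝ) := {q | ∀ i, q.2 = t i → f i q.1 < a i}
  let U : Fin n → Set ((ℝ × ℝ) × ℝ) := fun i => {q | |q.2 - t i| < δ ∧
    (q.2 = t i → a i < f i q.1 ∧ ∀ j, t j = t i → a i < a j → f i q.1 < a j)}
  let A : Fin n → Set ((ℝ × ℝ) × ℝ) := fun i => {q | t i - δ < q.2 ∧ q.2 < t i}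
  let B : Fin n → Set ((ℝ × ℝ) × ℝ) := fun i => {q | t i < q.2 ∧ q.2 < t i + δ}
  have hinter : ∀ i, U₀ ∩ U i = A i ∪ B i := by
    intro i
    ext q
    constructor
    · rintro ⟨h0, h1, h2⟩
      rw [abs_lt] at h1
      rcases lt_trichotomy q.2 (t i) with h | h | h
      · left; exact ⟨by linarith, h⟩
      · exact absurd (h2 h).1 (not_lt.2 (h0 i h).le)
      · right; exact ⟨h, by linarith⟩
    · intro h
      have h1 : |q.2 - t i| < δ ∧ q.2 ≠ t i := by
        rcases h with ⟨h, h'⟩ | ⟨h, h'⟩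
        · exact ⟨by rw [abs_lt]; constructor <;> linarith, h'.ne⟩
        · exact ⟨by rw [abs_lt]; constructor <;> linarith, h.ne'⟩
      refine ⟨fun k hk => ?_, h1.1, fun h => absurd h h1.2⟩
      exact absurd (hk.trans (hnear i k q.2 h1.1 hk)) h1.2
  have hU₀P : U₀ ⊆ {q | P q} := fun q hq => (hP q).2 fun i hi => (hq i hi).ne
  have hUP : ∀ i, U i ⊆ {q | P q} := by
    intro i q hq
    refine (hP q).2 fun k hk => ?_
    have hki := hnear i k q.2 hq.1 hk
    obtain ⟨h1, h2⟩ := hq.2 (hk.trans hki)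
    rw [hpar k i hki]
    intro he
    have := h2 k hki (by rw [← he]; exact h1)
    linarith
  have hAP : ∀ i, A i ⊆ {q | P q} := fun i q hq =>
    hU₀P ((hinter i).symm ▸ (Or.inl hq : q ∈ A i ∪ B i) : q ∈ U₀ ∩ U i).1
  have hBP : ∀ i, B i ⊆ {q | P q} := fun i q hq =>
    hU₀P ((hinter i).symm ▸ (Or.inr hq : q ∈ A i ∪ B i) : q ∈ U₀ ∩ U i).1
  have himg : ∀ W : Set ((ℝ × ℝ) × ℝ), W ⊆ {q | P q} →
      (Subtype.val '' (Subtype.val ⁻¹' W : Set {q // P q})) = W := by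
    intro W hW
    ext q
    constructor
    · rintro ⟨y, hy, rfl⟩
      exact hy
    · intro hq
      exact ⟨⟨q, hW hq⟩, hq, rfl⟩
  have hsc : ∀ W : Set ((ℝ × ℝ) × ℝ), W ⊆ {q | P q} → ContractibleSpace W →
      IsSimplyConnected (Subtype.val ⁻¹' W : Set {q // P q}) := by
    intro W hW hWc
    rw [← Topology.IsEmbedding.subtypeVal.isSimplyConnected_image, himg W hW]
    exact (inferInstance : SimplyConnectedSpace W)
  have hpc : ∀ W : Set ((ℝ × ℝ) × ℝ), W ⊆ {q | P q} → IsPathConnected W →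
      IsPathConnected (Subtype.val ⁻¹' W : Set {q // P q}) := by
    intro W hW hWc
    rw [Topology.IsEmbedding.subtypeVal.toIsInducing.isPathConnected_iff, himg W hW]
    exact hWc
  have hbase : ∀ z : ℝ, (R • e, z) ∈ U₀ := by
    intro z i _
    simp [hfe, hR]
  have hcontr₀ : ContractibleSpace U₀ := by
    let F : C(U₀, ℝ) := ⟨fun q => q.1.2, by fun_prop⟩
    let G : C(ℝ, U₀) := ⟨fun z => ⟨(R • e, z), hbase z⟩, by fun_prop⟩
    have hFG : (F.comp G).Homotopic (ContinuousMap.id ℝ) := by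
      have : F.comp G = ContinuousMap.id ℝ := by ext; rfl
      rw [this]
    have hGF : (G.comp F).Homotopic (ContinuousMap.id U₀) := by
      have hmemU : ∀ p : I × U₀, (((1 - (p.1 : ℝ)) • (R • e) + (p.1 : ℝ) • p.2.1.1,
          p.2.1.2) : (ℝ × ℝ) × ℝ) ∈ U₀ := by
        intro p i hi
        have h1 := p.2.2 i hi
        have h2 := hR i
        have h3 := p.1.2.1
        have h4 := p.1.2.2
        simp only [map_add, map_smul, hfe, smul_eq_mul, mul_one]
        rcases h3.eq_or_lt with h3 | h3
        · rw [← h3]; simpa using h2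
        · nlinarith
      refine ⟨{ toFun := fun p => ⟨_, hmemU p⟩
                continuous_toFun := Continuous.subtype_mk (by fun_prop) _
                map_zero_left := ?_
                map_one_left := ?_ }⟩
      · intro q; simp [G, F]
      · intro q; simp
    exact (ContinuousMap.HomotopyEquiv.mk F G hGF hFG).contractibleSpace
  have hcontr : ∀ i, ContractibleSpace (U i) := by
    intro i
    have hm : (c i • e, t i) ∈ U i := by
      refine ⟨by simpa using hδ0, fun _ => ?_⟩
      simp only [map_smul, hfe, smul_eq_mul, mul_one]
      exact ⟨hc2 i, fun j _ => hc1 i j⟩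
    refine StarConvex.contractibleSpace (x := (c i • e, t i)) ?_ ⟨_, hm⟩
    rintro ⟨y, z⟩ ⟨h1, h2⟩ α β hα hβ hαβ
    have e1 : α * t i + β * z - t i = β * (z - t i) := by
      have : α = 1 - β := by linarith
      rw [this]; ring
    rcases hβ.eq_or_lt with hβ0 | hβ0
    · have : α = 1 := by linarith
      rw [← hβ0, this]
      simpa using hm
    refine ⟨?_, fun hz => ?_⟩
    · simp only [Prod.snd_add, Prod.smul_snd, smul_eq_mul]
      rw [e1, abs_mul, abs_of_nonneg hβ]
      have : β ≤ 1 := by linarith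
      simp only at h1
      nlinarith [abs_nonneg (z - t i)]
    · simp only [Prod.snd_add, Prod.smul_snd, smul_eq_mul] at hz
      have hz' : z = t i := by
        have : β * (z - t i) = 0 := by rw [← e1]; linarith
        rcases mul_eq_zero.1 this with h | h <;> linarith
      obtain ⟨h3, h4⟩ := h2 hz'
      simp only at h3 h4
      simp only [Prod.fst_add, Prod.smul_fst, map_add, map_smul, hfe, smul_eq_mul, mul_one]
      have hα' : α = 1 - β := by linarith
      constructor
      · have h5 := hc2 i
        have e2 : a i = α * a i + β * a i := by rw [← add_mul, hαβ, one_mul]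
        nlinarith [mul_nonneg hα (sub_pos.2 h5).le, mul_pos hβ0 (sub_pos.2 h3)]
      · intro j hj hij
        have h5 := hc1 i j hij
        have h6 := h4 j hj hij
        have e2 : a j = α * a j + β * a j := by rw [← add_mul, hαβ, one_mul]
        nlinarith [mul_nonneg hα (sub_pos.2 h5).le, mul_pos hβ0 (sub_pos.2 h6)]
  have hcontA : ∀ i, IsPathConnected (A i) := by
    intro i
    refine Convex.isPathConnected ?_ ⟨(0, t i - δ / 2), by constructor <;> simp <;> linarith⟩
    exact (convex_Ioo (t i - δ) (t i)).linear_preimage (LinearMap.snd ℝ (ℝ × ℝ) ℝ)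
  have hcontB : ∀ i, IsPathConnected (B i) := by
    intro i
    refine Convex.isPathConnected ?_ ⟨(0, t i + δ / 2), by constructor <;> simp <;> linarith⟩
    exact (convex_Ioo (t i) (t i + δ)).linear_preimage (LinearMap.snd ℝ (ℝ × ℝ) ℝ)
  have C : LevelLines.Cover (X := {q // P q}) (Subtype.val ⁻¹' U₀) (fun i => Subtype.val ⁻¹' U i)
      (fun i => Subtype.val ⁻¹' A i) (fun i => Subtype.val ⁻¹' B i) :=
    { open₀ := by
        refine IsOpen.preimage continuous_subtype_val ?_
        have : U₀ = ⋂ i, ({q | q.2 ≠ t i} ∪ {q | f i q.1 < a i}) := by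
          ext q; simp [U₀, imp_iff_not_or]
        rw [this]
        refine isOpen_iInter_of_finite fun i => ?_
        exact (isOpen_ne_fun (by fun_prop) (by fun_prop)).union
          (isOpen_lt (by fun_prop) (by fun_prop))
      openU := by
        intro i
        refine IsOpen.preimage continuous_subtype_val ?_
        have : U i = {q | |q.2 - t i| < δ} ∩ ({q | q.2 ≠ t i} ∪ ({q | a i < f i q.1} ∩
            ⋂ j, ({q | ¬ (t j = t i ∧ a i < a j)} ∪ {q | f i q.1 < a j}))) := by
          ext q
          simp only [U, mem_ofPred_eq, mem_inter_iff, mem_union, mem_iInter, imp_iff_not_or,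
            not_and_or, or_assoc, ne_eq]
        rw [this]
        refine (isOpen_lt (by fun_prop) (by fun_prop)).inter
          ((isOpen_ne_fun (by fun_prop) (by fun_prop)).union
          ((isOpen_lt (by fun_prop) (by fun_prop)).inter ?_))
        exact isOpen_iInter_of_finite fun j => isOpen_const.union
          (isOpen_lt (by fun_prop) (by fun_prop))
      openA := fun i => IsOpen.preimage continuous_subtype_val
        (show IsOpen (Prod.snd ⁻¹' Ioo (t i - δ) (t i)) from isOpen_Ioo.preimage continuous_snd)
      openB := fun i => IsOpen.preimage continuous_subtype_val
        (show IsOpen (Prod.snd ⁻¹' Ioo (t i) (t i + δ)) from isOpen_Ioo.preimage continuous_snd)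
      sc₀ := hsc _ hU₀P hcontr₀
      scU := fun i => hsc _ (hUP i) (hcontr i)
      pcA := fun i => hpc _ (hAP i) (hcontA i)
      pcB := fun i => hpc _ (hBP i) (hcontB i)
      inter := fun i => by rw [← preimage_inter, hinter, preimage_union]
      disj := fun i => by
        rw [disjoint_left]
        rintro q ⟨_, h⟩ ⟨h', _⟩
        exact lt_asymm h h'
      interU := by
        rintro i j hij ⟨q, hq⟩ ⟨⟨h1, h2⟩, ⟨h3, h4⟩⟩ k hk
        exfalso
        simp only at *
        have e1 := hnear i k q.2 h1 hk
        have e2 := hnear j k q.2 h3 hk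
        obtain ⟨h5, h6⟩ := h2 (hk.trans e1)
        obtain ⟨h7, h8⟩ := h4 (hk.trans e2)
        have e3 : t i = t j := e1.symm.trans e2
        rw [hpar i j e3] at h5 h6
        rcases lt_or_gt_of_ne (hinj i j hij e3) with h | h
        · exact lt_asymm (h6 j e3.symm h) h7
        · exact lt_asymm (h8 i e3 h) h5
      cover := by
        rintro ⟨q, hq⟩
        by_cases h0 : q ∈ U₀
        · exact Or.inl h0
        right
        have hq' := (hP q).1 hq
        have h0' : ∃ i, q.2 = t i ∧ a i ≤ f i q.1 := by
          by_contra hcon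
          push Not at hcon
          exact h0 hcon
        obtain ⟨i, hi, hai⟩ := h0'
        classical
        let S : Finset (Fin n) := Finset.univ.filter fun j => q.2 = t j ∧ a j ≤ f j q.1
        obtain ⟨j, hj, hmax⟩ := S.exists_max_image a ⟨i, by simp [S, hi]; simpa using hai⟩
        simp only [S, Finset.mem_filter, Finset.mem_univ, true_and] at hj hmax
        refine ⟨j, ?_, fun _ => ⟨lt_of_le_of_ne hj.2 (Ne.symm (hq' j hj.1)), fun k hk hjk => ?_⟩⟩
        · simpa [hj.1] using hδ0
        · by_contra hcon
          rw [not_lt] at hcon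
          have := hmax k ⟨hj.1.trans hk.symm, by rw [hpar k j hk]; exact hcon⟩
          linarith }
  exact C.free ⟨⟨(R • e, 0), hU₀P (hbase 0)⟩, hbase 0⟩ x

end Geometry

/-- Let `L₁, …, Lₙ` be pairwise disjoint straight lines in `ℝ³ = ℝ² × ℝ`, each level, i.e.
`Lᵢ = {(pᵢ + s • vᵢ, tᵢ) : s ∈ ℝ}` lies in the horizontal plane `ℝ² × {tᵢ}` with direction
`vᵢ ≠ 0`. Then the fundamental group of the complement `ℝ³ ∖ (L₁ ∪ ⋯ ∪ Lₙ)` is a free group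
of rank `n`. -/
theorem fundamental_group_complement_level_lines_free
    (n : ℕ) (p v : Fin n → ℝ × ℝ) (t : Fin n → ℝ) (hv : ∀ i, v i ≠ 0)
    (L : Fin n → Set ((ℝ × ℝ) × ℝ))
    (hL : ∀ i, L i = {q | ∃ s : ℝ, q = (p i + s • v i, t i)})
    (hdisj : ∀ i j, i ≠ j → Disjoint (L i) (L j))
    (x : {q : (ℝ × ℝ) × ℝ // q ∉ ⋃ i, L i}) :
    Nonempty (FundamentalGroup {q : (ℝ × ℝ) × ℝ // q ∉ ⋃ i, L i} x ≃* FreeGroup (Fin n)) := by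
  obtain ⟨m, hm0⟩ : ∃ m : ℝ, m ∉ Set.range fun i => (v i).2 / (v i).1 :=
    (Set.finite_range _).infinite_compl.nonempty
  have hD : ∀ i, (v i).1 * m - (v i).2 ≠ 0 := by
    intro i h
    by_cases h1 : (v i).1 = 0
    · exact hv i (Prod.ext h1 (by rw [h1] at h; simpa using h))
    · exact hm0 ⟨i, by field_simp; linarith⟩
  let f : Fin n → (ℝ × ℝ →L[ℝ] ℝ) := fun i => ((v i).1 * m - (v i).2)⁻¹ •
    ((v i).1 • ContinuousLinearMap.snd ℝ ℝ ℝ - (v i).2 • ContinuousLinearMap.fst ℝ ℝ ℝ)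
  have hf : ∀ i y, f i y = ((v i).1 * m - (v i).2)⁻¹ * ((v i).1 * y.2 - (v i).2 * y.1) := by
    intro i y; simp [f]
  have hfv : ∀ i y (s : ℝ), f i (y + s • v i) = f i y := by
    intro i y s; simp only [hf, Prod.fst_add, Prod.snd_add, Prod.smul_fst, Prod.smul_snd,
      smul_eq_mul]; ring
  have hmem : ∀ i q, q ∈ L i ↔ q.2 = t i ∧ f i q.1 = f i (p i) := by
    intro i q
    rw [hL]
    constructor
    · rintro ⟨s, rfl⟩
      exact ⟨rfl, hfv _ _ _⟩
    · rintro ⟨h1, h2⟩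
      rw [hf, hf] at h2
      have h3 := mul_left_cancel₀ (inv_ne_zero (hD i)) h2
      obtain ⟨⟨y1, y2⟩, z⟩ := q
      simp only at h1 h3
      by_cases h0 : (v i).1 = 0
      · have h0' : (v i).2 ≠ 0 := fun h => hv i (Prod.ext h0 h)
        have : y1 = (p i).1 := by
          rw [h0] at h3
          apply mul_left_cancel₀ h0'; linarith
        refine ⟨(y2 - (p i).2) / (v i).2, Prod.ext (Prod.ext ?_ ?_) h1⟩
        · simp [h0, this]
        · simp only [Prod.snd_add, Prod.smul_snd, smul_eq_mul]; field_simp; ring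
      · refine ⟨(y1 - (p i).1) / (v i).1, Prod.ext (Prod.ext ?_ ?_) h1⟩
        · simp only [Prod.fst_add, Prod.smul_fst, smul_eq_mul]; field_simp; ring
        · simp only [Prod.snd_add, Prod.smul_snd, smul_eq_mul]; field_simp; linarith
  have hpar0 : ∀ i j, t i = t j → (v i).1 * (v j).2 - (v i).2 * (v j).1 = 0 := by
    intro i j hij
    by_contra hne
    have hij' : i ≠ j := by
      rintro rfl; exact hne (by ring)
    -- the point `p j + s • v j` of the line `j` lies on the line `i`
    have hfj : f i (v j) ≠ 0 := by
      rw [hf]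
      exact mul_ne_zero (inv_ne_zero (hD i)) hne
    let s := (f i (p i) - f i (p j)) / f i (v j)
    have hd := Set.disjoint_left.1 (hdisj i j hij')
    refine @hd (p j + s • v j, t j) ?_ ?_
    · rw [hmem]
      refine ⟨hij.symm, ?_⟩
      simp only [map_add, map_smul, smul_eq_mul, s]
      field_simp
      ring
    · rw [hL]; exact ⟨s, rfl⟩
  refine LevelLines.geometry t (fun i => f i (p i)) f (1, m) ?_ ?_ ?_ _ ?_ x
  · intro i
    rw [hf]
    simp only [mul_one]
    exact inv_mul_cancel₀ (hD i)
  · intro i j hij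
    have h := hpar0 i j hij
    ext <;> simp only [ContinuousLinearMap.comp_apply, ContinuousLinearMap.inl_apply,
      ContinuousLinearMap.inr_apply, hf]
    all_goals
      have h1 := hD i
      have h2 := hD j
      rw [inv_mul_eq_div, inv_mul_eq_div, div_eq_div_iff h1 h2]
    · linear_combination m * h
    · linear_combination (-1) * h
  · intro i j hij htij he
    have hfij : f i = f j := by
      have h := hpar0 i j htij
      ext <;> simp only [ContinuousLinearMap.comp_apply, ContinuousLinearMap.inl_apply,
        ContinuousLinearMap.inr_apply, hf]
      all_goals
        have h1 := hD i
        have h2 := hD j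
        rw [inv_mul_eq_div, inv_mul_eq_div, div_eq_div_iff h1 h2]
      · linear_combination m * h
      · linear_combination (-1) * h
    have hd := Set.disjoint_left.1 (hdisj i j hij)
    refine @hd (p i, t i) ?_ ?_
    · rw [hmem]; exact ⟨rfl, rfl⟩
    · rw [hmem]; exact ⟨htij, by rw [← hfij]; simpa [hfij] using he⟩
  · intro q
    simp only [Set.mem_iUnion, hmem, not_exists, not_and, ne_eq]
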